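/- Let K be a bounded d-dimensional maximal lattice-free set in ℝ^d. Then K is a polytope and the relative interior of every facet of K contains at least one point of ℤ^d. -/

import Mathlib

open Pointwise

/-- The standard integer lattice `ℤ^d` viewed as a subset of `ℝ^d`. -/
def intLattice (d : ℕ) : Set (Fin d → ℝ) :=
  Set.range (fun z : Fin d → ℤ => fun i => (z i : ℝ))

/-- A set `K ⊆ ℝ^d` is lattice-free if it is closed, convex, and its interior
contains no point of `ℤ^d`. -/
def IsLatticeFree (d : ℕ) (K : Set (Fin d → ℝ)) : Prop :=
  IsClosed K ∧ Convex ℝ K ∧ interior K ∩ intLattice d = ∅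

/-- A lattice-free set is maximal if it is not properly contained in another
lattice-free set. -/
def IsMaxLatticeFree (d : ℕ) (K : Set (Fin d → ℝ)) : Prop :=
  IsLatticeFree d K ∧ ∀ K' : Set (Fin d → ℝ), IsLatticeFree d K' → K ⊆ K' → K' = K

/-- The recession cone of `K`: all vectors `u` with `K + u ⊆ K`. -/
def recCone (d : ℕ) (K : Set (Fin d → ℝ)) : Set (Fin d → ℝ) :=
  {u | ∀ x ∈ K, x + u ∈ K}

/-- A polyhedron: an intersection of finitely many closed halfspaces. -/
def IsPolyhedron (d : ℕ) (K : Set (Fin d → ℝ)) : Prop :=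
  ∃ (n : ℕ) (a : Fin n → (Fin d → ℝ)) (b : Fin n → ℝ),
    K = {x | ∀ i, ∑ j, a i j * x j ≤ b i}

/-- A polytope: the convex hull of finitely many points. -/
def IsPolytope (d : ℕ) (K : Set (Fin d → ℝ)) : Prop :=
  ∃ s : Finset (Fin d → ℝ), K = convexHull ℝ (s : Set (Fin d → ℝ))

/-- A facet of a `d`-dimensional convex set `K ⊆ ℝ^d`: a nonempty convex
(extreme) face of dimension `d - 1`. -/
def IsFacet (d : ℕ) (K F : Set (Fin d → ℝ)) : Prop :=
  F.Nonempty ∧ IsExtreme ℝ K F ∧ Convex ℝ F ∧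
    Module.finrank ℝ (affineSpan ℝ F).direction + 1 = d

/-!
For each lattice point `z`, which is not interior to `K`, choose a closed half-space through `z`
containing `K`. Since `K` is bounded, only the finitely many `z` in a large ball matter: the
intersection `Q` of their half-spaces, truncated by the ball, is a lattice-free set containing `K`,
hence equals `K`, and as `Q` is connected it cannot leave the ball, so `Q = K`. Thus *every* choice
of such half-spaces cuts out `K`, and in particular `K` is a polytope.

Let `p` be a point of the relative interior of a facet `F` and suppose that no lattice point lies
there. Then no segment from `p` to a lattice point `z` can be prolonged beyond `z` inside `K`: as
`z` is not interior to `K`, the whole prolonged segment would lie in `F`, with `z` in the relative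
interior. So some defining inequality of the polyhedron `K` gives, after a translation, a half-space
with `z` on its boundary and `p` strictly inside. These half-spaces cut out `K` too, which puts
`p` in the interior of `K`, a contradiction.
-/

open Set Filter Topology AffineMap

section LinearAlgebra

variable {k V : Type*} [Field k] [AddCommGroup V] [Module k V]

lemma vectorSpan_eq_ker_of_finrank_add_one_eq {s : Set V}
    (hs : Module.finrank k (vectorSpan k s) + 1 = Module.finrank k V) {f : Module.Dual k V}
    (hf : f ≠ 0) (hconst : ∀ x ∈ s, ∀ y ∈ s, f x = f y) : vectorSpan k s = f.ker := by
  have : FiniteDimensional k V := Module.finite_of_finrank_pos (by omega)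
  have hle : vectorSpan k s ≤ f.ker := by
    rw [vectorSpan_def, Submodule.span_le]
    rintro _ ⟨x, hx, y, hy, rfl⟩
    simp [hconst x hx y hy]
  have hker := Module.Dual.finrank_ker_add_one_of_ne_zero hf
  exact Submodule.eq_of_le_of_finrank_eq hle (by omega)

end LinearAlgebra

lemma mem_intrinsicInterior_iff_mem_nhdsWithin {𝕜 V P : Type*} [Ring 𝕜] [AddCommGroup V]
    [Module 𝕜 V] [TopologicalSpace P] [AddTorsor V P] {s : Set P} {p : P} :
    p ∈ intrinsicInterior 𝕜 s ↔
      p ∈ affineSpan 𝕜 s ∧ s ∈ 𝓝[(affineSpan 𝕜 s : Set P)] p := by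
  rw [mem_intrinsicInterior]
  constructor
  · rintro ⟨y, hy, rfl⟩
    exact ⟨y.2, preimage_coe_mem_nhds_subtype.1 (mem_interior_iff_mem_nhds.1 hy)⟩
  · rintro ⟨hp, hs⟩
    exact ⟨⟨p, hp⟩, mem_interior_iff_mem_nhds.2 (preimage_coe_mem_nhds_subtype.2 hs), rfl⟩

section TopologicalVectorSpace

variable {E : Type*} [AddCommGroup E] [Module ℝ E]

lemma exists_mem_openSegment_of_eventually_lineMap_mem {s : Set E} {p z : E}
    (h : ∀ᶠ t : ℝ in 𝓝[>] 1, lineMap p z t ∈ s) : ∃ w ∈ s, z ∈ openSegment ℝ p w := by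
  obtain ⟨t, hts, ht : 1 < t⟩ := (h.and self_mem_nhdsWithin).exists
  refine ⟨lineMap p z t, hts, ?_⟩
  rw [openSegment_eq_image_lineMap]
  refine ⟨t⁻¹, ⟨by positivity, inv_lt_one_of_one_lt₀ ht⟩, ?_⟩
  rw [lineMap_lineMap_right, inv_mul_cancel₀ (by positivity), lineMap_apply_one]

variable [TopologicalSpace E]

section Polyhedron

variable {ι : Type*} {f : ι → StrongDual ℝ E} {b : ι → ℝ}

/-- The intersection of the closed half-spaces `f i ≤ b i`; it is a polyhedron in the usual sense
when `ι` is finite. -/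
def polyhedron (f : ι → StrongDual ℝ E) (b : ι → ℝ) : Set E := {x | ∀ i, f i x ≤ b i}

lemma isClosed_polyhedron : IsClosed (polyhedron f b) := by
  simp only [polyhedron, ofPred_forall]
  exact isClosed_iInter fun i => isClosed_le (f i).continuous continuous_const

lemma convex_polyhedron : Convex ℝ (polyhedron f b) := by
  simp only [polyhedron, ofPred_forall]
  exact convex_iInter fun i => convex_halfSpace_le (f i).isLinear (b i)

lemma mem_interior_polyhedron_of_forall_lt [Finite ι] {p : E} (hp : ∀ i, f i p < b i) :
    p ∈ interior (polyhedron f b) := by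
  have hev : ∀ᶠ x in 𝓝 p, ∀ i, f i x < b i := eventually_all.2 fun i =>
    ((f i).continuous.tendsto p).eventually_lt_const (hp i)
  exact mem_interior_iff_mem_nhds.2 (hev.mono fun x hx i => (hx i).le)

end Polyhedron

variable [IsTopologicalAddGroup E] [ContinuousSMul ℝ E]

lemma apply_lt_of_mem_interior {s : Set E} {f : StrongDual ℝ E} (hf : f ≠ 0) {c : ℝ}
    (hs : ∀ x ∈ s, f x ≤ c) {z : E} (hz : z ∈ interior s) : f z < c := by
  have hsub : s ⊆ f ⁻¹' Iic c := hs
  have hz' := interior_mono hsub hz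
  rwa [← (f.isOpenMap_of_ne_zero hf).preimage_interior_eq_interior_preimage f.continuous,
    interior_Iic] at hz'

lemma exists_forall_apply_le_of_notMem_interior {K : Set E} (hK : Convex ℝ K)
    (hint : (interior K).Nonempty) {z : E} (hz : z ∉ interior K) :
    ∃ f : StrongDual ℝ E, f ≠ 0 ∧ ∀ x ∈ K, f x ≤ f z := by
  obtain ⟨f, u, hf, hfK, hfz⟩ := geometric_hahn_banach_of_nonempty_interior hK
    (convex_singleton z) (disjoint_singleton_right.2 hz) hint (singleton_nonempty z)
  exact ⟨f, hf, fun x hx => (hfK x hx).trans (hfz z rfl)⟩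

lemma tendsto_lineMap_nhdsGT_one (p z : E) :
    Tendsto (fun t : ℝ => lineMap p z t) (𝓝[>] 1) (𝓝 z) := by
  have hcont : Continuous fun t : ℝ => (lineMap p z t : E) := lineMap_continuous
  simpa using (hcont.tendsto 1).mono_left nhdsWithin_le_nhds

section IntrinsicInterior

lemma exists_mem_openSegment_of_mem_intrinsicInterior {s : Set E} {p x : E}
    (hp : p ∈ intrinsicInterior ℝ s) (hx : x ∈ affineSpan ℝ s) :
    ∃ w ∈ s, p ∈ openSegment ℝ x w := by
  obtain ⟨hpA, hs⟩ := mem_intrinsicInterior_iff_mem_nhdsWithin.1 hp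
  have hlim : Tendsto (fun t : ℝ => lineMap x p t) (𝓝[>] 1) (𝓝[(affineSpan ℝ s : Set E)] p) :=
    tendsto_nhdsWithin_iff.2 ⟨tendsto_lineMap_nhdsGT_one x p,
      Eventually.of_forall fun t => lineMap_mem t hx hpA⟩
  exact exists_mem_openSegment_of_eventually_lineMap_mem (hlim.eventually hs)

lemma openSegment_subset_intrinsicInterior_of_convex {s : Set E} (hs : Convex ℝ s) {p w : E}
    (hp : p ∈ intrinsicInterior ℝ s) (hw : w ∈ s) :
    openSegment ℝ p w ⊆ intrinsicInterior ℝ s := by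
  intro z hz
  have hzA := subset_affineSpan ℝ s (hs.openSegment_subset (intrinsicInterior_subset hp) hw hz)
  have hwA := subset_affineSpan ℝ s hw
  obtain ⟨hpA, hps⟩ := mem_intrinsicInterior_iff_mem_nhdsWithin.1 hp
  rw [openSegment_symm, openSegment_eq_image_lineMap] at hz
  obtain ⟨a, ⟨ha0, ha1⟩, rfl⟩ := hz
  refine mem_intrinsicInterior_iff_mem_nhdsWithin.2 ⟨hzA, ?_⟩
  -- The dilation of the affine span with centre `w` and ratio `a⁻¹` maps `lineMap w p a` to `p`.
  have hdil : Tendsto (fun y => lineMap w y a⁻¹) (𝓝[(affineSpan ℝ s : Set E)] lineMap w p a)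
      (𝓝[(affineSpan ℝ s : Set E)] p) := by
    refine tendsto_nhdsWithin_iff.2 ⟨?_, ?_⟩
    · have hcont : Continuous fun y : E => (lineMap w y a⁻¹ : E) := by
        simp only [lineMap_apply_module]
        fun_prop
      have hlim := (hcont.tendsto (lineMap w p a)).mono_left
        (nhdsWithin_le_nhds (s := affineSpan ℝ s))
      rwa [lineMap_lineMap_right, inv_mul_cancel₀ ha0.ne', lineMap_apply_one] at hlim
    · filter_upwards [self_mem_nhdsWithin] with y hy
      exact lineMap_mem a⁻¹ hwA hy
  filter_upwards [hdil hps] with y hy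
  have hmem := hs.lineMap_mem hw hy ⟨ha0.le, ha1.le⟩
  rwa [lineMap_lineMap_right, mul_inv_cancel₀ ha0.ne', lineMap_apply_one] at hmem

lemma subset_of_isExtreme_of_mem_intrinsicInterior {K F G : Set E} (hG : IsExtreme ℝ K G)
    (hFK : F ⊆ K) {p : E} (hpF : p ∈ intrinsicInterior ℝ F) (hpG : p ∈ G) : F ⊆ G := by
  intro x hx
  obtain ⟨w, hw, hpw⟩ :=
    exists_mem_openSegment_of_mem_intrinsicInterior hpF (subset_affineSpan ℝ F hx)
  exact hG.left_mem_of_mem_openSegment (hFK hx) (hFK hw) hpG hpw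

lemma mem_of_isExtreme_of_mem_affineSpan {K F : Set E} (hF : IsExtreme ℝ K F)
    (hne : (intrinsicInterior ℝ F).Nonempty) {x : E} (hxK : x ∈ K) (hx : x ∈ affineSpan ℝ F) :
    x ∈ F := by
  obtain ⟨p, hp⟩ := hne
  obtain ⟨w, hw, hpw⟩ := exists_mem_openSegment_of_mem_intrinsicInterior hp hx
  exact hF.left_mem_of_mem_openSegment hxK (hF.subset hw) (intrinsicInterior_subset hp) hpw

end IntrinsicInterior

section Polyhedron

variable {ι : Type*} [Finite ι] {f : ι → StrongDual ℝ E} {b : ι → ℝ}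

lemma exists_mem_polyhedron_mem_openSegment {p z : E} (hp : p ∈ polyhedron f b)
    (hz : ∀ i, b i ≤ f i z → f i z ≤ f i p) : ∃ w ∈ polyhedron f b, z ∈ openSegment ℝ p w := by
  refine exists_mem_openSegment_of_eventually_lineMap_mem (eventually_all.2 fun i => ?_)
  rcases lt_or_ge (f i z) (b i) with hlt | hge
  · have hlim := ((f i).continuous.tendsto z).comp (tendsto_lineMap_nhdsGT_one p z)
    exact (hlim.eventually_lt_const hlt).mono fun t ht => ht.le
  · filter_upwards [self_mem_nhdsWithin] with t (ht : 1 < t)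
    have hzp := hz i hge
    have hpb := hp i
    simp only [lineMap_apply_module', map_add, map_smul, map_sub, smul_eq_mul]
    nlinarith

lemma finite_extremePoints_polyhedron : ((polyhedron f b).extremePoints ℝ).Finite := by
  -- An extreme point is determined by the set of inequalities that are tight there.
  refine Finite.of_finite_image (f := fun x => {i | f i x = b i}) (toFinite _) ?_
  intro x hx y hy hxy
  have htight : ∀ i, b i ≤ f i x → f i x ≤ f i y := fun i hi => by
    have hxi : f i x = b i := (hx.1 i).antisymm hi
    have hyi : f i y = b i := (Set.ext_iff.1 hxy i).1 hxi
    exact (hxi.trans hyi.symm).le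
  obtain ⟨w, hw, hxw⟩ := exists_mem_polyhedron_mem_openSegment hy.1 htight
  exact (hx.2 hy.1 hw hxw).symm

lemma exists_finset_polyhedron_eq_convexHull [T2Space E] [LocallyConvexSpace ℝ E]
    (hcomp : IsCompact (polyhedron f b)) :
    ∃ s : Finset E, polyhedron f b = convexHull ℝ (s : Set E) := by
  have hfin : ((polyhedron f b).extremePoints ℝ).Finite := finite_extremePoints_polyhedron
  refine ⟨hfin.toFinset, ?_⟩
  rw [hfin.coe_toFinset, ← (hfin.isCompact_convexHull ℝ).isClosed.closure_eq,
    closure_convexHull_extremePoints hcomp convex_polyhedron]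

end Polyhedron

/-- A facet of a convex set `K`: a nonempty convex extreme subset whose affine span has codimension
one. This is `IsFacet` without coordinates. -/
structure IsCodimOneFace (K F : Set E) : Prop where
  nonempty : F.Nonempty
  isExtreme : IsExtreme ℝ K F
  convex : Convex ℝ F
  finrank_direction_add_one :
    Module.finrank ℝ (affineSpan ℝ F).direction + 1 = Module.finrank ℝ E

namespace IsCodimOneFace

variable {K F : Set E} {p : E}

lemma eq_toExposed (hF : IsCodimOneFace K F) (hp : p ∈ intrinsicInterior ℝ F)
    {f : StrongDual ℝ E} (hf : f ≠ 0) (hpf : p ∈ f.toExposed K) : F = f.toExposed K := by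
  have hsub : F ⊆ f.toExposed K := subset_of_isExtreme_of_mem_intrinsicInterior
    ContinuousLinearMap.toExposed.isExposed.isExtreme hF.isExtreme.subset hp hpf
  refine hsub.antisymm fun x hx => mem_of_isExtreme_of_mem_affineSpan hF.isExtreme ⟨p, hp⟩ hx.1 ?_
  have hconst : ∀ y ∈ f.toExposed K, ∀ z ∈ f.toExposed K, f y = f z := fun y hy z hz =>
    (hz.2 y hy.1).antisymm (hy.2 z hz.1)
  have hker : (affineSpan ℝ F).direction = f.toLinearMap.ker := by
    have hrank := hF.finrank_direction_add_one
    rw [direction_affineSpan] at hrank ⊢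
    exact vectorSpan_eq_ker_of_finrank_add_one_eq hrank
      (fun h => hf (ContinuousLinearMap.coe_injective h))
      fun y hy z hz => hconst y (hsub hy) z (hsub hz)
  have hpF := subset_affineSpan ℝ F (intrinsicInterior_subset hp)
  rw [← AffineSubspace.vsub_right_mem_direction_iff_mem hpF, hker]
  simp [hconst x hx p hpf]

lemma mem_intrinsicInterior_of_mem_openSegment (hF : IsCodimOneFace K F) (hK : Convex ℝ K)
    (hint : (interior K).Nonempty) (hp : p ∈ intrinsicInterior ℝ F) {w z : E} (hw : w ∈ K)
    (hz : z ∈ openSegment ℝ p w) (hzint : z ∉ interior K) : z ∈ intrinsicInterior ℝ F := by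
  have hpK : p ∈ K := hF.isExtreme.subset (intrinsicInterior_subset hp)
  obtain ⟨f, hf, hfz⟩ := exists_forall_apply_le_of_notMem_interior hK hint hzint
  have hzf : z ∈ f.toExposed K := ⟨hK.openSegment_subset hpK hw hz, hfz⟩
  have hexp : IsExtreme ℝ K (f.toExposed K) :=
    ContinuousLinearMap.toExposed.isExposed.isExtreme
  have hwF : w ∈ F := by
    rw [hF.eq_toExposed hp hf (hexp.left_mem_of_mem_openSegment hpK hw hzf hz)]
    exact hexp.right_mem_of_mem_openSegment hpK hw hzf hz
  exact openSegment_subset_intrinsicInterior_of_convex hF.convex hp hwF hz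

lemma exists_apply_lt_of_notMem_intrinsicInterior {ι : Type*} [Finite ι]
    {f : ι → StrongDual ℝ E} {b : ι → ℝ} (hF : IsCodimOneFace (polyhedron f b) F)
    (hint : (interior (polyhedron f b)).Nonempty) (hp : p ∈ intrinsicInterior ℝ F) {z : E}
    (hzint : z ∉ interior (polyhedron f b)) (hzF : z ∉ intrinsicInterior ℝ F) :
    ∃ g : StrongDual ℝ E, (∀ x ∈ polyhedron f b, g x ≤ g z) ∧ g p < g z := by
  by_contra! hno
  have hle : ∀ i, b i ≤ f i z → f i z ≤ f i p := fun i hi =>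
    hno (f i) fun x hx => (hx i).trans hi
  obtain ⟨w, hw, hzw⟩ := exists_mem_polyhedron_mem_openSegment
    (hF.isExtreme.subset (intrinsicInterior_subset hp)) hle
  exact hzF (hF.mem_intrinsicInterior_of_mem_openSegment convex_polyhedron hint hp hw hzw hzint)

end IsCodimOneFace

end TopologicalVectorSpace

section SFree

variable {E : Type*} [NormedAddCommGroup E] [NormedSpace ℝ E] {S K : Set E}

lemma IsCodimOneFace.disjoint_interior {F : Set E} (hF : IsCodimOneFace K F) :
    Disjoint F (interior K) := by
  refine disjoint_left.2 fun q hqF hqK => ?_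
  have hKF : F = K := hF.isExtreme.subset.antisymm <|
    subset_of_isExtreme_of_mem_intrinsicInterior hF.isExtreme subset_rfl
      (interior_subset_intrinsicInterior hqK) hqF
  have hspan : affineSpan ℝ F = ⊤ := by
    rw [hKF, ← top_le_iff, ← isOpen_interior.affineSpan_eq_top ⟨q, hqK⟩]
    exact affineSpan_mono ℝ interior_subset
  have hrank := hF.finrank_direction_add_one
  rw [hspan, AffineSubspace.direction_top, finrank_top] at hrank
  omega

/-- `K` is an `S`-free convex set: it is closed and convex, and no point of `S` is interior to `K`.
The lattice-free sets of `ℝ^d` are the case `S = ℤ^d`. -/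
structure IsSFree (S K : Set E) : Prop where
  isClosed : IsClosed K
  convex : Convex ℝ K
  disjoint_interior : Disjoint (interior K) S

lemma isSFree_polyhedron_inter {C : Set E} (hCclosed : IsClosed C) (hCconv : Convex ℝ C)
    {f : S → StrongDual ℝ E} (hf : ∀ z, f z ≠ 0) :
    IsSFree S (polyhedron (fun z : {z : S | (z : E) ∈ C} => f z) (fun z => f z z) ∩ C) where
  isClosed := isClosed_polyhedron.inter hCclosed
  convex := convex_polyhedron.inter hCconv
  disjoint_interior := by
    refine disjoint_left.2 fun z hz hzS => ?_
    have hzC : z ∈ C := (interior_subset hz).2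
    exact (apply_lt_of_mem_interior (hf ⟨z, hzS⟩) (fun x hx => hx.1 ⟨⟨z, hzS⟩, hzC⟩) hz).false

lemma exists_finite_eq_polyhedron_of_maximal_isSFree [ProperSpace E] (hSdisc : IsDiscrete S)
    (hSclosed : IsClosed S) (hK : Maximal (IsSFree S) K) (hbdd : Bornology.IsBounded K)
    (hne : K.Nonempty) {f : S → StrongDual ℝ E} (hf : ∀ z, f z ≠ 0)
    (hfK : ∀ z, ∀ x ∈ K, f z x ≤ f z z) :
    ∃ T : Set S, T.Finite ∧ K = polyhedron (fun z : T => f z) (fun z : T => f z z) := by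
  obtain ⟨R, hR⟩ := hbdd.subset_ball 0
  have hTfin : {z : S | (z : E) ∈ Metric.closedBall 0 R}.Finite :=
    ((Metric.finite_isBounded_inter_isClosed hSdisc Metric.isBounded_closedBall hSclosed).preimage
      Subtype.val_injective.injOn).subset fun z hz => ⟨hz, z.2⟩
  refine ⟨_, hTfin, ?_⟩
  set Q := polyhedron (fun z : {z : S | (z : E) ∈ Metric.closedBall 0 R} => f z)
    (fun z => f z z)
  have hKQ : K ⊆ Q := fun x hx z => hfK z x hx
  have heq : K = Q ∩ Metric.closedBall 0 R := hK.eq_of_subset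
    (isSFree_polyhedron_inter Metric.isClosed_closedBall (convex_closedBall 0 R) hf)
    (subset_inter hKQ (hR.trans Metric.ball_subset_closedBall))
  have hQball : Q ⊆ Metric.ball 0 R :=
    convex_polyhedron.isPreconnected.subset_of_closure_inter_subset Metric.isOpen_ball
      (hne.mono (subset_inter hKQ hR)) fun x hx =>
        hR (heq.superset ⟨hx.2, Metric.closure_ball_subset_closedBall hx.1⟩)
  exact hKQ.antisymm fun x hx => heq.superset ⟨hx, Metric.ball_subset_closedBall (hQball hx)⟩

lemma nonempty_intrinsicInterior_inter_of_isCodimOneFace [FiniteDimensional ℝ E]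
    (hSdisc : IsDiscrete S) (hSclosed : IsClosed S) {ι : Type*} [Finite ι]
    {f : ι → StrongDual ℝ E} {b : ι → ℝ} (hK : Maximal (IsSFree S) (polyhedron f b))
    (hbdd : Bornology.IsBounded (polyhedron f b)) (hint : (interior (polyhedron f b)).Nonempty)
    {F : Set E} (hF : IsCodimOneFace (polyhedron f b) F) :
    (intrinsicInterior ℝ F ∩ S).Nonempty := by
  by_contra hempty
  obtain ⟨p, hp⟩ := hF.nonempty.intrinsicInterior hF.convex
  have hsep (z : S) : ∃ g : StrongDual ℝ E, (∀ x ∈ polyhedron f b, g x ≤ g z) ∧ g p < g z :=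
    hF.exists_apply_lt_of_notMem_intrinsicInterior hint hp
      (disjoint_right.1 hK.prop.disjoint_interior z.2) fun hz => hempty ⟨z, hz, z.2⟩
  choose g hgK hgp using hsep
  have hg (z : S) : g z ≠ 0 := by
    intro h
    simpa [h] using hgp z
  obtain ⟨T, hTfin, hKT⟩ := exists_finite_eq_polyhedron_of_maximal_isSFree hSdisc hSclosed hK hbdd
    (hint.mono interior_subset) hg hgK
  have : Finite T := hTfin
  have hpint : p ∈ interior (polyhedron f b) := by
    rw [hKT]
    exact mem_interior_polyhedron_of_forall_lt fun z => hgp z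
  exact disjoint_left.1 hF.disjoint_interior (intrinsicInterior_subset hp) hpint

theorem stmt_15_general [FiniteDimensional ℝ E] (hSdisc : IsDiscrete S) (hSclosed : IsClosed S)
    (hK : Maximal (IsSFree S) K) (hdim : affineSpan ℝ K = ⊤) (hbdd : Bornology.IsBounded K) :
    (∃ s : Finset E, K = convexHull ℝ (s : Set E)) ∧
      ∀ F, IsCodimOneFace K F → (intrinsicInterior ℝ F ∩ S).Nonempty := by
  have hint : (interior K).Nonempty := hK.prop.convex.interior_nonempty_iff_affineSpan_eq_top.2 hdim
  choose f hf hfK using fun z : S => exists_forall_apply_le_of_notMem_interior hK.prop.convex hint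
    (disjoint_right.1 hK.prop.disjoint_interior z.2)
  obtain ⟨T, hTfin, rfl⟩ := exists_finite_eq_polyhedron_of_maximal_isSFree hSdisc hSclosed hK hbdd
    (hint.mono interior_subset) hf hfK
  have : Finite T := hTfin
  exact ⟨exists_finset_polyhedron_eq_convexHull
      (Metric.isCompact_of_isClosed_isBounded isClosed_polyhedron hbdd),
    fun F hF => nonempty_intrinsicInterior_inter_of_isCodimOneFace hSdisc hSclosed hK hbdd hint hF⟩

end SFree

section IntegerLattice

variable {d : ℕ} {K F : Set (Fin d → ℝ)}

lemma isClosedEmbedding_intCast_pi (d : ℕ) :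
    IsClosedEmbedding (fun z : Fin d → ℤ => fun i => (z i : ℝ)) :=
  .piMap fun _ => Int.isClosedEmbedding_coe_real

lemma isClosed_intLattice (d : ℕ) : IsClosed (intLattice d) :=
  (isClosedEmbedding_intCast_pi d).isClosed_range

lemma isDiscrete_intLattice (d : ℕ) : IsDiscrete (intLattice d) :=
  (isClosedEmbedding_intCast_pi d).isInducing.isDiscrete_range

lemma isSFree_intLattice_iff : IsSFree (intLattice d) K ↔ IsLatticeFree d K :=
  ⟨fun h => ⟨h.isClosed, h.convex, h.disjoint_interior.inter_eq⟩,
    fun ⟨hclosed, hconv, hfree⟩ => ⟨hclosed, hconv, disjoint_iff_inter_eq_empty.2 hfree⟩⟩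

lemma IsMaxLatticeFree.maximal_isSFree (hK : IsMaxLatticeFree d K) :
    Maximal (IsSFree (intLattice d)) K :=
  ⟨isSFree_intLattice_iff.2 hK.1,
    fun K' hK' hKK' => (hK.2 K' (isSFree_intLattice_iff.1 hK') hKK').subset⟩

lemma IsFacet.isCodimOneFace (hF : IsFacet d K F) : IsCodimOneFace K F :=
  ⟨hF.1, hF.2.1, hF.2.2.1, by simpa using hF.2.2.2⟩

end IntegerLattice

/-- A bounded `d`-dimensional maximal lattice-free set in `ℝ^d`
is a polytope whose every facet has an integer point in its relative interior. -/
theorem stmt_15 (d : ℕ) (K : Set (Fin d → ℝ))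
    (hK : IsMaxLatticeFree d K) (hdim : affineSpan ℝ K = ⊤)
    (hbd : Bornology.IsBounded K) :
    IsPolytope d K ∧
      ∀ F : Set (Fin d → ℝ), IsFacet d K F →
        (intrinsicInterior ℝ F ∩ intLattice d).Nonempty := by
  obtain ⟨hpoly, hfacet⟩ := stmt_15_general (isDiscrete_intLattice d) (isClosed_intLattice d)
    hK.maximal_isSFree hdim hbd
  exact ⟨hpoly, fun F hF => hfacet F hF.isCodimOneFace⟩
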